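/- Let d ≥ 1, t with 0 ≤ t < d, and q ≥ 1. Let C ⊆ Q_q^d be a code in which any two distinct codewords have Hamming distance at least t+1. Then there exist an integer q' ≥ q and an MDS(t,d,q') code M ⊆ Q_{q'}^d such that the image of C under the coordinatewise inclusion Q_q ⊆ Q_{q'} is contained in M. -/

import Mathlib

/-- `C ⊆ Q_q^d` is an MDS code with code distance `t+1`: every `t`-dimensional
axis-aligned plane (equivalently, every assignment of values to a set of `d - t`
coordinates) meets `C` in exactly one point. -/
def IsMDS {α : Type*} (d t : ℕ) (C : Set (Fin d → α)) : Prop :=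
  ∀ S : Finset (Fin d), S.card = d - t →
    ∀ g : Fin d → α, ∃! x : Fin d → α, x ∈ C ∧ ∀ i ∈ S, x i = g i

/-!
Start from a linear MDS code over a huge alphabet: take vectors `v i` in general position in a
space `U` of dimension `d - t`, and let the codewords be `i ↦ f (v i)` for the linear maps
`f : U → W`. Inside any box `∏ i, (c i + P)` with `c` a codeword and `P` a subspace of `W`, the
code is again MDS, and so is its translate by any `δ` with coordinates in `P`. Hence the code may
be switched to a translate independently in each of a family of disjoint boxes.

Tag the word `x` as the tuple `y x` of distinct basis vectors `e (i, x i)` of `W`. Modulo the space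
`P x` of its syndromes `∑ i, w i • y x i`, where `w` runs over the linear relations
`∑ i, w i • v i = 0`, the tuple `y x` is congruent to a codeword, so switching the code inside the
box `∏ i, (y x i + P x)` makes `y x` a codeword. If the boxes of `x ≠ x'` met, comparing
coefficients would produce a nonzero relation supported on the agreement set of `x` and `x'` and
one further coordinate; this set has at most `d - t` elements, so general position forbids it.
-/

section Switching

variable {α β : Type*} {d t : ℕ}

/-- An MDS code inside the box `∏ i, A i`, the alphabet being allowed to depend on the
coordinate. Only the values of `g` on `S` matter, so only these are required to lie in the box. -/
def IsMDSOn (d t : ℕ) (A : Fin d → Set α) (C : Set (Fin d → α)) : Prop :=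
  C ⊆ Set.univ.pi A ∧ ∀ S : Finset (Fin d), S.card = d - t →
    ∀ g : Fin d → α, (∀ i ∈ S, g i ∈ A i) → ∃! x : Fin d → α, x ∈ C ∧ ∀ i ∈ S, x i = g i

theorem isMDSOn_univ_iff {C : Set (Fin d → α)} :
    IsMDSOn d t (fun _ ↦ Set.univ) C ↔ IsMDS d t C := by
  simp [IsMDSOn, IsMDS]

theorem IsMDS.preimage_equiv {M : Set (Fin d → β)} (hM : IsMDS d t M) (e : Fin d → α ≃ β) :
    IsMDS d t {x | (fun i ↦ e i (x i)) ∈ M} := by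
  intro S hS g
  rw [← (Equiv.piCongrRight e).symm.existsUnique_congr_right]
  simpa [Equiv.symm_apply_eq] using hM S hS fun i ↦ e i (g i)

theorem IsMDS.switch {X : Type*} {M : Set (Fin d → α)} (hM : IsMDS d t M)
    {A : X → Fin d → Set α} {N : X → Set (Fin d → α)}
    (hA : Pairwise fun x x' ↦ Disjoint (Set.univ.pi (A x)) (Set.univ.pi (A x')))
    (hMA : ∀ x, IsMDSOn d t (A x) (M ∩ Set.univ.pi (A x)))
    (hN : ∀ x, IsMDSOn d t (A x) (N x)) :
    IsMDS d t ((M \ ⋃ x, Set.univ.pi (A x)) ∪ ⋃ x, N x) := by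
  intro S hS g
  obtain ⟨c, ⟨hcM, hcg⟩, hc⟩ := hM S hS g
  have mem_box : ∀ x, (∀ i ∈ S, g i ∈ A x i) → c ∈ Set.univ.pi (A x) := by
    intro x hg
    obtain ⟨y, ⟨⟨hyM, hyA⟩, hyg⟩, -⟩ := (hMA x).2 S hS g hg
    exact hc y ⟨hyM, hyg⟩ ▸ hyA
  have mem_box_of_mem : ∀ x, ∀ y ∈ N x, (∀ i ∈ S, y i = g i) → c ∈ Set.univ.pi (A x) :=
    fun x y hy hyg ↦ mem_box x fun i hi ↦ hyg i hi ▸ (hN x).1 hy i trivial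
  by_cases hcA : ∃ x, c ∈ Set.univ.pi (A x)
  · obtain ⟨x, hx⟩ := hcA
    obtain ⟨y, ⟨hyN, hyg⟩, hy⟩ := (hN x).2 S hS g fun i hi ↦ hcg i hi ▸ hx i trivial
    refine ⟨y, ⟨.inr (Set.mem_iUnion_of_mem x hyN), hyg⟩, ?_⟩
    rintro z ⟨⟨hzM, hzA⟩ | hzN, hzg⟩
    · exact absurd (Set.mem_iUnion_of_mem x (hc z ⟨hzM, hzg⟩ ▸ hx)) hzA
    · obtain ⟨x', hzN⟩ := Set.mem_iUnion.1 hzN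
      obtain rfl : x' = x := hA.eq <|
        Set.not_disjoint_iff.2 ⟨c, mem_box_of_mem x' z hzN hzg, hx⟩
      exact hy z ⟨hzN, hzg⟩
  · refine ⟨c, ⟨.inl ⟨hcM, fun h ↦ hcA (Set.mem_iUnion.1 h)⟩, hcg⟩, ?_⟩
    rintro z ⟨⟨hzM, -⟩ | hzN, hzg⟩
    · exact hc z ⟨hzM, hzg⟩
    · obtain ⟨x, hzN⟩ := Set.mem_iUnion.1 hzN
      exact absurd ⟨x, mem_box_of_mem x z hzN hzg⟩ hcA

end Switching

section GeneralPosition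

variable {R U ι : Type*} [CommRing R] [AddCommGroup U] [Module R U]

/-- Vectors in general position: any `finrank R U` or fewer of them are linearly independent. -/
def InGeneralPosition (R : Type*) {U ι : Type*} [CommRing R] [AddCommGroup U] [Module R U]
    (v : ι → U) : Prop :=
  ∀ S : Finset ι, S.card ≤ Module.finrank R U → LinearIndepOn R v S

theorem InGeneralPosition.eq_zero_of_linearCombination_eq_zero [Fintype ι] {v : ι → U}
    (hv : InGeneralPosition R v) {w : ι → R} (hw : Fintype.linearCombination R v w = 0)
    {S : Finset ι} (hS : S.card ≤ Module.finrank R U) (hwS : ∀ i ∉ S, w i = 0) : w = 0 := by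
  rw [Fintype.linearCombination_apply,
    ← Finset.sum_subset S.subset_univ fun i _ hi ↦ by rw [hwS i hi, zero_smul]] at hw
  funext i
  by_cases hi : i ∈ S
  · exact linearIndepOn_finset_iff.1 (hv S hS) w hw i hi
  · exact hwS i hi

variable {K : Type*} [Field K] [Module K U]

theorem inGeneralPosition_vandermonde {a : ι → K} (ha : Function.Injective a) (k : ℕ) :
    InGeneralPosition K fun i ↦ fun m : Fin k ↦ a i ^ (m : ℕ) := by
  intro S hS
  rw [Module.finrank_fin_fun] at hS
  apply LinearIndepOn.of_comp (LinearMap.funLeft K K (Fin.castLE hS))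
  rw [LinearIndepOn, ← linearIndependent_equiv S.equivFin.symm]
  apply Matrix.linearIndependent_rows_of_det_ne_zero
    (A := Matrix.vandermonde fun n ↦ a (S.equivFin.symm n))
  exact Matrix.det_vandermonde_ne_zero_iff.2
    (ha.comp (Subtype.val_injective.comp S.equivFin.symm.injective))

theorem InGeneralPosition.span_image_eq_top [FiniteDimensional K U] {v : ι → U}
    (hv : InGeneralPosition K v) {S : Finset ι} (hS : S.card = Module.finrank K U) :
    Submodule.span K (v '' S) = ⊤ := by
  rw [Set.image_eq_range]
  exact (hv S hS.le).span_eq_top_of_card_eq_finrank' (by simpa using hS)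

end GeneralPosition

section GeneratedCode

variable {R U W ι : Type*} [CommRing R] [AddCommGroup U] [Module R U] [AddCommGroup W] [Module R W]

/-- The code over the alphabet `W` generated by the columns `v i`: its codewords are the tuples
`i ↦ f (v i)` for the linear maps `f : U →ₗ[R] W`. -/
def generatedCode (R W : Type*) {U ι : Type*} [CommRing R] [AddCommGroup U] [Module R U]
    [AddCommGroup W] [Module R W] (v : ι → U) : Submodule R (ι → W) :=
  LinearMap.range (LinearMap.pi fun i ↦ LinearMap.applyₗ (v i) : (U →ₗ[R] W) →ₗ[R] ι → W)

theorem mem_generatedCode {v : ι → U} {y : ι → W} :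
    y ∈ generatedCode R W v ↔ ∃ f : U →ₗ[R] W, ∀ i, f (v i) = y i := by
  simp [generatedCode, LinearMap.mem_range, funext_iff]

theorem apply_mem_of_mem_generatedCode {v : ι → U} {S : Set ι}
    (hS : Submodule.span R (v '' S) = ⊤) {y : ι → W} (hy : y ∈ generatedCode R W v)
    {P : Submodule R W} (hyP : ∀ i ∈ S, y i ∈ P) (i : ι) : y i ∈ P := by
  obtain ⟨f, hf⟩ := mem_generatedCode.1 hy
  have : Submodule.span R (v '' S) ≤ P.comap f := by
    rw [Submodule.span_le]
    rintro _ ⟨j, hj, rfl⟩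
    simpa [hf] using hyP j hj
  simpa [hf] using this (hS ▸ Submodule.mem_top : v i ∈ _)

/-- The box `∏ i, (c i + P)`, as a family of subsets of the alphabet. -/
def cosetBox (P : Submodule R W) (c : ι → W) (i : ι) : Set W :=
  {z | z - c i ∈ P}

theorem cosetBox_congr {P : Submodule R W} {c c' : ι → W} (h : ∀ i, c i - c' i ∈ P) :
    cosetBox P c = cosetBox P c' := by
  ext i z
  rw [cosetBox, cosetBox, Set.mem_ofPred_eq, Set.mem_ofPred_eq, ← sub_add_sub_cancel z (c i) (c' i),
    P.add_mem_iff_left (h i)]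

/-- The submodule of all syndromes `∑ i, w i • y i` of the tuple `y`, where `w` runs over the linear
relations among the `v i`. It measures the failure of `y` to lie in `generatedCode R W v`. -/
def syndromes (R : Type*) {U W ι : Type*} [CommRing R] [AddCommGroup U] [Module R U]
    [AddCommGroup W] [Module R W] [Fintype ι] (v : ι → U) (y : ι → W) : Submodule R W :=
  (LinearMap.ker (Fintype.linearCombination R v)).map (Fintype.linearCombination R y)

/-- The box `∏ i, (y i + P)`, where `P` is the module of syndromes of `y`. Over a field it is the
smallest box of this shape around `y` that contains a codeword of `generatedCode R W v`. -/
def syndromeBox (R : Type*) {U W ι : Type*} [CommRing R] [AddCommGroup U] [Module R U]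
    [AddCommGroup W] [Module R W] [Fintype ι] (v : ι → U) (y : ι → W) : Set (ι → W) :=
  Set.univ.pi (cosetBox (syndromes R v y) y)

end GeneratedCode

section LinearMDS

variable {K U W ι : Type*} [Field K] [AddCommGroup U] [Module K U] [AddCommGroup W] [Module K W]

theorem exists_mem_generatedCode_eqOn {v : ι → U} {S : Set ι} (hS : LinearIndepOn K v S)
    (g : ι → W) : ∃ y ∈ generatedCode K W v, Set.EqOn y g S := by
  have hli : LinearIndependent K fun i : S ↦ v i := hS
  obtain ⟨f, hf⟩ := ((Module.Basis.span hli).constr K fun i : S ↦ g i).exists_extend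
  refine ⟨fun i ↦ f (v i), mem_generatedCode.2 ⟨f, fun _ ↦ rfl⟩, fun i hi ↦ ?_⟩
  have := (Module.Basis.span hli).constr_basis K (fun i : S ↦ g i) ⟨i, hi⟩
  rwa [← hf, LinearMap.comp_apply, Submodule.subtype_apply, Module.Basis.span_apply] at this

theorem isMDSOn_translate_generatedCode [FiniteDimensional K U] {d t : ℕ} {v : Fin d → U}
    (hv : InGeneralPosition K v) (hU : Module.finrank K U = d - t) {P : Submodule K W}
    {c δ : Fin d → W} (hc : c ∈ generatedCode K W v) (hδ : ∀ i, δ i ∈ P) :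
    IsMDSOn d t (cosetBox P c)
      ({y | y - δ ∈ generatedCode K W v} ∩ Set.univ.pi (cosetBox P c)) := by
  refine ⟨Set.inter_subset_right, fun S hS g hg ↦ ?_⟩
  rw [← hU] at hS
  obtain ⟨y, hy, hyg⟩ := exists_mem_generatedCode_eqOn (hv S hS.le) (g - δ)
  have hyP : ∀ i, (y - c) i ∈ P := by
    refine apply_mem_of_mem_generatedCode (hv.span_image_eq_top hS) (sub_mem hy hc) fun i hi ↦ ?_
    rw [Pi.sub_apply, hyg hi, Pi.sub_apply, sub_right_comm]
    exact sub_mem (hg i hi) (hδ i)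
  refine ⟨y + δ, ⟨⟨by simpa using hy, fun i _ ↦ ?_⟩, fun i hi ↦ by simp [hyg hi]⟩, ?_⟩
  · simpa [cosetBox, add_sub_right_comm] using add_mem (hyP i) (hδ i)
  · rintro z ⟨⟨hz, -⟩, hzg⟩
    have hzy := apply_mem_of_mem_generatedCode (P := ⊥) (hv.span_image_eq_top hS) (sub_mem hz hy)
      fun i hi ↦ by simp [hyg hi, hzg i hi]
    funext i
    simpa [sub_eq_zero, sub_eq_iff_eq_add] using hzy i

theorem isMDS_generatedCode [FiniteDimensional K U] {d t : ℕ} {v : Fin d → U}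
    (hv : InGeneralPosition K v) (hU : Module.finrank K U = d - t) :
    IsMDS d t (generatedCode K W v : Set (Fin d → W)) := by
  have box_top : cosetBox (⊤ : Submodule K W) (0 : Fin d → W) = fun _ ↦ Set.univ :=
    funext fun _ ↦ Set.eq_univ_of_forall fun _ ↦ trivial
  simpa [box_top, isMDSOn_univ_iff] using isMDSOn_translate_generatedCode (P := ⊤) hv hU
    (zero_mem (generatedCode K W v)) (δ := 0) fun _ ↦ trivial

theorem exists_mem_generatedCode_sub_mem_syndromes [Fintype ι] (v : ι → U) (y : ι → W) :
    ∃ c ∈ generatedCode K W v, ∀ i, y i - c i ∈ syndromes K v y := by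
  classical
  let T := Fintype.linearCombination K v
  obtain ⟨R₀, hR₀⟩ := T.rangeRestrict.exists_rightInverse_of_surjective T.range_rangeRestrict
  obtain ⟨R, hR⟩ := R₀.exists_extend
  have hTR (i : ι) : T (R (v i)) = v i := by
    have hi : v i ∈ LinearMap.range T := ⟨Pi.single i 1, by simp [T]⟩
    have hRv : R (v i) = R₀ ⟨v i, hi⟩ := LinearMap.congr_fun hR ⟨v i, hi⟩
    rw [hRv]
    exact congrArg Subtype.val (LinearMap.congr_fun hR₀ ⟨v i, hi⟩)
  refine ⟨fun i ↦ Fintype.linearCombination K y (R (v i)),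
    mem_generatedCode.2 ⟨Fintype.linearCombination K y ∘ₗ R, fun _ ↦ rfl⟩,
    fun i ↦ ⟨Pi.single i 1 - R (v i), ?_, by simp⟩⟩
  rw [SetLike.mem_coe, LinearMap.mem_ker, map_sub, sub_eq_zero]
  simpa [T] using (hTR i).symm

theorem exists_isMDS_of_disjoint_syndromeBox [FiniteDimensional K U] {d t : ℕ} {v : Fin d → U}
    (hv : InGeneralPosition K v) (hU : Module.finrank K U = d - t) {X : Type*}
    (y : X → Fin d → W)
    (hy : Pairwise fun x x' ↦ Disjoint (syndromeBox K v (y x)) (syndromeBox K v (y x'))) :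
    ∃ M : Set (Fin d → W), IsMDS d t M ∧ ∀ x, y x ∈ M := by
  choose c hc hyc using fun x ↦ exists_mem_generatedCode_sub_mem_syndromes (K := K) v (y x)
  have box_eq (x : X) : syndromeBox K v (y x) =
      Set.univ.pi (cosetBox (syndromes K v (y x)) (c x)) :=
    congrArg (Set.univ.pi ·) (cosetBox_congr (hyc x))
  simp only [box_eq] at hy
  have isMDSOn_code (x : X) : IsMDSOn d t (cosetBox (syndromes K v (y x)) (c x))
      (generatedCode K W v ∩ Set.univ.pi (cosetBox (syndromes K v (y x)) (c x))) := by
    simpa using isMDSOn_translate_generatedCode hv hU (hc x) (δ := 0) fun _ ↦ zero_mem _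
  refine ⟨_, (isMDS_generatedCode hv hU).switch hy isMDSOn_code fun x ↦
      isMDSOn_translate_generatedCode (δ := y x - c x) hv hU (hc x) (hyc x),
    fun x ↦ .inr (Set.mem_iUnion_of_mem x ⟨?_, fun i _ ↦ hyc x i⟩)⟩
  simpa using hc x

end LinearMDS

section Tagging

variable {R U ι α : Type*} [CommRing R] [AddCommGroup U] [Module R U]

/-- The word `x` over `α` as a word over the alphabet `ι × α →₀ R`: a symbol `a` in position `i`
becomes the basis vector indexed by `(i, a)`, so that different positions use disjoint sets of
basis vectors. -/
noncomputable def taggedWord (R : Type*) {ι α : Type*} [CommRing R] (x : ι → α) (i : ι) :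
    ι × α →₀ R :=
  Finsupp.single (i, x i) 1

theorem linearCombination_taggedWord_apply [Fintype ι] [DecidableEq α] (x : ι → α) (w : ι → R)
    (j : ι) (a : α) :
    Fintype.linearCombination R (taggedWord R x) w (j, a) = if x j = a then w j else 0 := by
  classical
  simp [Fintype.linearCombination_apply, taggedWord, Finsupp.single_apply, Finsupp.finsetSum_apply,
    ite_and]

theorem disjoint_syndromeBox_taggedWord [Nontrivial R] [Fintype ι] [DecidableEq α] {v : ι → U}
    (hv : InGeneralPosition R v) {x x' : ι → α}
    (hx : (Finset.univ.filter fun i ↦ x i = x' i).card < Module.finrank R U) (hne : x ≠ x') :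
    Disjoint (syndromeBox R v (taggedWord R x)) (syndromeBox R v (taggedWord R x')) := by
  classical
  obtain ⟨i, hi⟩ := Function.ne_iff.1 hne
  rw [Set.disjoint_left]
  intro z hz hz'
  obtain ⟨w, hw, hwz⟩ := hz i trivial
  obtain ⟨w', -, hwz'⟩ := hz' i trivial
  have hdiff : Fintype.linearCombination R (taggedWord R x) w + taggedWord R x i =
      Fintype.linearCombination R (taggedWord R x') w' + taggedWord R x' i := by
    rw [hwz, hwz', sub_add_cancel, sub_add_cancel]
  have coeff_eq (j : ι) (hj : x j ≠ x' j) : w j + (if i = j then 1 else 0) = 0 := by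
    have := DFunLike.congr_fun hdiff (j, x j)
    simp only [Finsupp.add_apply, linearCombination_taggedWord_apply, taggedWord,
      Finsupp.single_apply, Prod.mk.injEq, if_neg hj.symm] at this
    by_cases hij : i = j
    · subst hij
      simpa [hj.symm] using this
    · simpa [hij] using this
  have hw0 : w = 0 := by
    refine hv.eq_zero_of_linearCombination_eq_zero hw
      (S := insert i (Finset.univ.filter fun j ↦ x j = x' j))
      ((Finset.card_insert_le _ _).trans hx) fun j hj ↦ ?_
    simp only [Finset.mem_insert, Finset.mem_filter, Finset.mem_univ, true_and, not_or] at hj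
    simpa [Ne.symm hj.1] using coeff_eq j hj.2
  simpa [hw0] using coeff_eq i hi

end Tagging

section Embedding

theorem exists_equiv_fin_apply_castLE {β : Type*} [Finite β] {q : ℕ} (f : Fin q ↪ β) :
    ∃ (q' : ℕ) (hqq' : q ≤ q') (e : Fin q' ≃ β), ∀ a, e (Fin.castLE hqq' a) = f a := by
  classical
  obtain ⟨m, ⟨g⟩⟩ := Finite.exists_equiv_fin ↥(Set.range f)ᶜ
  let e : Fin (q + m) ≃ β := finSumFinEquiv.symm.trans <|
    ((Equiv.ofInjective f f.injective).sumCongr g.symm).trans <|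
      Equiv.Set.sumCompl (Set.range f)
  refine ⟨q + m, Nat.le_add_right q m, e, fun a ↦ ?_⟩
  change e (Fin.castAdd m a) = f a
  simp [e]

theorem IsMDS.exists_fin_image_castLE_subset {β : Type*} [Finite β] {d t q : ℕ}
    {M : Set (Fin d → β)} (hM : IsMDS d t M) {C : Set (Fin d → Fin q)} (f : Fin q ↪ β)
    (hCM : (fun x i ↦ f (x i)) '' C ⊆ M) :
    ∃ (q' : ℕ) (hqq' : q ≤ q') (M' : Set (Fin d → Fin q')),
      IsMDS d t M' ∧ (fun x i ↦ Fin.castLE hqq' (x i)) '' C ⊆ M' := by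
  obtain ⟨q', hqq', e, he⟩ := exists_equiv_fin_apply_castLE f
  refine ⟨q', hqq', {y | (fun i ↦ e (y i)) ∈ M}, hM.preimage_equiv fun _ ↦ e, ?_⟩
  rintro _ ⟨x, hx, rfl⟩
  simpa [he] using hCM ⟨x, hx, rfl⟩

theorem card_filter_eq_add_hammingDist {ι α : Type*} [Fintype ι] [DecidableEq α] (x y : ι → α) :
    (Finset.univ.filter fun i ↦ x i = y i).card + hammingDist x y = Fintype.card ι := by
  simpa [hammingDist] using
    Finset.card_filter_add_card_filter_not (s := Finset.univ) fun i ↦ x i = y i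

theorem exists_isMDS_taggedWord_mem {K α : Type*} [Field K] [DecidableEq α] {d t : ℕ}
    (a : Fin d ↪ K) (C : Set (Fin d → α))
    (hC : ∀ x ∈ C, ∀ y ∈ C, x ≠ y → t + 1 ≤ hammingDist x y) :
    ∃ M : Set (Fin d → (Fin d × α →₀ K)), IsMDS d t M ∧ ∀ x ∈ C, taggedWord K x ∈ M := by
  have hv := inGeneralPosition_vandermonde a.injective (d - t)
  have boxes_disjoint : Pairwise fun x y : C ↦ Disjoint _ _ := fun x y hxy ↦ by
    have hne : x.1 ≠ y.1 := Subtype.coe_ne_coe.2 hxy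
    refine disjoint_syndromeBox_taggedWord hv ?_ hne
    have hdist := hC x x.2 y y.2 hne
    have hadd := card_filter_eq_add_hammingDist x.1 y.1
    rw [Fintype.card_fin] at hadd
    rw [Module.finrank_fin_fun]
    omega
  obtain ⟨M, hM, hCM⟩ :=
    exists_isMDS_of_disjoint_syndromeBox hv (Module.finrank_fin_fun K) _ boxes_disjoint
  exact ⟨M, hM, fun x hx ↦ hCM ⟨x, hx⟩⟩

universe u in
theorem embedding_in_MDS_general {α : Type u} [DecidableEq α] {d t : ℕ} (ht : t < d)
    (C : Set (Fin d → α)) (hC : ∀ x ∈ C, ∀ y ∈ C, x ≠ y → t + 1 ≤ hammingDist x y) :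
    ∃ (β : Type u) (f : α ↪ β) (M : Set (Fin d → β)),
      (Finite α → Finite β) ∧ IsMDS d t M ∧ (fun x i ↦ f (x i)) '' C ⊆ M := by
  obtain ⟨p, hp, hprime⟩ := Nat.exists_infinite_primes d
  have : Fact p.Prime := ⟨hprime⟩
  have natCast_injective : Function.Injective fun i : Fin d ↦ ((i : ℕ) : ZMod p) := fun i j hij ↦
    Fin.ext <| ((ZMod.natCast_eq_natCast_iff _ _ _).1 hij).eq_of_lt_of_lt (by omega) (by omega)
  obtain ⟨M, hM, hCM⟩ := exists_isMDS_taggedWord_mem ⟨_, natCast_injective⟩ C hC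
  -- Every position uses the tag `i₀`; permuting the alphabet in position `i` restores the tag `i`.
  let i₀ : Fin d := ⟨t, ht⟩
  let f : α ↪ (Fin d × α →₀ ZMod p) := ⟨fun a ↦ Finsupp.single (i₀, a) 1,
    (Finsupp.single_left_injective one_ne_zero).comp (Prod.mk_right_injective i₀)⟩
  let e (i : Fin d) : (Fin d × α →₀ ZMod p) ≃ (Fin d × α →₀ ZMod p) :=
    (Finsupp.domCongr ((Equiv.swap i₀ i).prodCongr (Equiv.refl α))).toEquiv
  refine ⟨_, f, _, fun _ ↦ DFunLike.finite _, hM.preimage_equiv e, ?_⟩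
  rintro _ ⟨x, hx, rfl⟩
  have retag : (fun i ↦ e i (f (x i))) = taggedWord (ZMod p) x := by
    funext i
    simp [e, f, taggedWord]
  simpa [retag] using hCM x hx

end Embedding

/-- Any code of length `d` with code distance `t+1` over `Q_q` can be embedded
(via the coordinatewise inclusion `Q_q ⊆ Q_{q'}`) in an MDS code with the same
distance and length over some larger alphabet `Q_{q'}`. -/
theorem embedding_in_MDS (d t q : ℕ) (hd : 1 ≤ d) (ht : t < d) (hq : 1 ≤ q)
    (C : Set (Fin d → Fin q))
    (hC : ∀ x ∈ C, ∀ y ∈ C, x ≠ y → t + 1 ≤ hammingDist x y) :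
    ∃ (q' : ℕ) (hqq' : q ≤ q') (M : Set (Fin d → Fin q')),
      IsMDS d t M ∧
        (fun x : Fin d → Fin q => fun i => Fin.castLE hqq' (x i)) '' C ⊆ M := by
  obtain ⟨β, f, M, hβ, hM, hCM⟩ := embedding_in_MDS_general ht C hC
  have : Finite β := hβ inferInstance
  exact hM.exists_fin_image_castLE_subset f hCM
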